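/- (Proposition 3: fast time-scale feasibility.) Let Ξ be convex, let the fast time-scale disturbance process satisfy quasi-stationarity, and suppose the decentralized affine policy is feasible for the slow time-scale robust constraints: for every ξ = (1, ξ(0), …, ξ(T−1)) ∈ Ξ and every t = 0,…,T−1, (i) v̲² ≤ V_u·u(t;ξ) + V_ξ·ξ(t) + v₀²·𝟏 ≤ v̄² componentwise; (ii) for each i = 1,…,n, (S_q u(t;ξ))_i² + (S_I ξ(t))_i² ≤ (s_i^I)²; (iii) p̲^S ≤ S_p·u(t;ξ) ≤ p̄^S componentwise; and (iv) 0 ≤ x(t;ξ) ≤ b componentwise for t = 0,…,T. Then for every realization of the fast time-scale disturbance process satisfying quasi-stationarity, the fast time-scale trajectories satisfy, for every t = 0,…,T−1 and k = 0,…,K−1: v̲² ≤ V_u·u(k,t) + V_ξ·ξ(k,t) + v₀²·𝟏 ≤ v̄²; (S_q u(k,t))_i² + (S_I ξ(k,t))_i² ≤ (s_i^I)² for each i; p̲^S ≤ S_p·u(k,t) ≤ p̄^S; and 0 ≤ x(k,t) ≤ b for k = 0,…,K. -/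

import Mathlib

/-- Slow time-scale average `ξ̄(t) = (1/K)·Σ_{ℓ=0}^{K−1} ξ(ℓ,t)` of a fast
time-scale disturbance process `ξ(k,t)`. -/
noncomputable def slowAvg {ι : Type*} (K : ℕ) (ξ : ℕ → ℕ → ι → ℝ) (t : ℕ) :
    ι → ℝ :=
  (K : ℝ)⁻¹ • ∑ ℓ ∈ Finset.range K, ξ ℓ t

/-- Slow time-scale affine input `u(t;ξ) = ū(t) + Σ_{s=0}^{t} Q(t,s) ξ(s)`.
Inputs live in `ℝ^{2n} ≃ (Fin n × Fin 2 → ℝ)` and disturbance blocks in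
`ℝ^{3n} ≃ (Fin n × Fin 3 → ℝ)`. -/
def uslow {n : ℕ} (ubar : ℕ → Fin n × Fin 2 → ℝ)
    (Q : ℕ → ℕ → Matrix (Fin n × Fin 2) (Fin n × Fin 3) ℝ)
    (ζ : ℕ → Fin n × Fin 3 → ℝ) (t : ℕ) : Fin n × Fin 2 → ℝ :=
  ubar t + ∑ s ∈ Finset.range (t + 1), (Q t s).mulVec (ζ s)

/-- Fast time-scale input
`u(k,t) = ū(t) + Q(t,t) ξ(k,t) + Σ_{s=0}^{t−1} Q(t,s) ξ̄(s)`. -/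
noncomputable def ufast {n : ℕ} (K : ℕ) (ubar : ℕ → Fin n × Fin 2 → ℝ)
    (Q : ℕ → ℕ → Matrix (Fin n × Fin 2) (Fin n × Fin 3) ℝ)
    (ξ : ℕ → ℕ → Fin n × Fin 3 → ℝ) (k t : ℕ) : Fin n × Fin 2 → ℝ :=
  ubar t + (Q t t).mulVec (ξ k t)
    + ∑ s ∈ Finset.range t, (Q t s).mulVec (slowAvg K ξ s)

/-- `V_u = R ⊗ [1, 0] + X ⊗ [0, 1] ∈ ℝ^{n×2n}` (Kronecker product written
entrywise). -/
def Vu (n : ℕ) (R X : Matrix (Fin n) (Fin n) ℝ) :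
    Matrix (Fin n) (Fin n × Fin 2) ℝ :=
  Matrix.of fun i p => R i p.1 * ![(1 : ℝ), 0] p.2 + X i p.1 * ![(0 : ℝ), 1] p.2

/-- `V_ξ = R ⊗ [−1, 0, 1] − X ⊗ [0, 1, 0] ∈ ℝ^{n×3n}` (Kronecker product
written entrywise). -/
def Vxi (n : ℕ) (R X : Matrix (Fin n) (Fin n) ℝ) :
    Matrix (Fin n) (Fin n × Fin 3) ℝ :=
  Matrix.of fun i p =>
    R i p.1 * ![(-1 : ℝ), 0, 1] p.2 - X i p.1 * ![(0 : ℝ), 1, 0] p.2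

/-- Selection matrix `S_p = I_n ⊗ [1, 0] ∈ ℝ^{n×2n}` extracting the storage
active power coordinates of the input. -/
def Smp (n : ℕ) : Matrix (Fin n) (Fin n × Fin 2) ℝ :=
  Matrix.of fun i p => (if i = p.1 then (1 : ℝ) else 0) * ![(1 : ℝ), 0] p.2

/-- Selection matrix `S_q = I_n ⊗ [0, 1] ∈ ℝ^{n×2n}` extracting the inverter
reactive power coordinates of the input. -/
def Smq (n : ℕ) : Matrix (Fin n) (Fin n × Fin 2) ℝ :=
  Matrix.of fun i p => (if i = p.1 then (1 : ℝ) else 0) * ![(0 : ℝ), 1] p.2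

/-- Selection matrix `S_I = I_n ⊗ [0, 0, 1] ∈ ℝ^{n×3n}` extracting the PV
active power coordinates of a disturbance block. -/
def SmI (n : ℕ) : Matrix (Fin n) (Fin n × Fin 3) ℝ :=
  Matrix.of fun i p => (if i = p.1 then (1 : ℝ) else 0) * ![(0 : ℝ), 0, 1] p.2

/-- `B = I_n ⊗ [−Δ, 0] ∈ ℝ^{n×2n}`. -/
def Bmat (n : ℕ) (Δ : ℝ) : Matrix (Fin n) (Fin n × Fin 2) ℝ :=
  Matrix.of fun i p => (if i = p.1 then (1 : ℝ) else 0) * ![-Δ, (0 : ℝ)] p.2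

/-- Slow time-scale state `x(t;ξ) = x(0) + B·Σ_{s=0}^{t−1} u(s;ξ)`. -/
def xslow {n : ℕ} (Δ : ℝ) (x0 : Fin n → ℝ)
    (ubar : ℕ → Fin n × Fin 2 → ℝ)
    (Q : ℕ → ℕ → Matrix (Fin n × Fin 2) (Fin n × Fin 3) ℝ)
    (ζ : ℕ → Fin n × Fin 3 → ℝ) (t : ℕ) : Fin n → ℝ :=
  x0 + (Bmat n Δ).mulVec (∑ s ∈ Finset.range t, uslow ubar Q ζ s)

open Finset

/-- The slow time-scale average is a convex combination of the fast samples. -/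
lemma slowAvg_mem_convexHull {ι : Type*} {K : ℕ} (hK : 0 < K) (ξ : ℕ → ℕ → ι → ℝ) (t : ℕ) :
    slowAvg K ξ t ∈ convexHull ℝ ((fun ℓ => ξ ℓ t) '' Set.Iio K) := by
  have hK' : (K : ℝ) ≠ 0 := by positivity
  rw [slowAvg, smul_sum]
  refine (convex_convexHull ℝ _).sum_mem (fun _ _ => by positivity) (by simp [hK'])
    fun ℓ hℓ => subset_convexHull ℝ _ ⟨ℓ, by simpa using hℓ, rfl⟩

/-- A convex set that contains every selection of fast samples contains every profile whose blocks
are convex combinations of fast samples. -/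
lemma mem_of_forall_mem_convexHull {ι : Type*} {T K : ℕ} (hK : 0 < K)
    {Ξ : Set (ℝ × (Fin T → ι → ℝ))} (hconv : Convex ℝ Ξ) {ξ : ℕ → ℕ → ι → ℝ}
    (hquasi : ∀ f : ℕ → ℕ, (∀ t, f t < K) → ((1 : ℝ), fun t : Fin T => ξ (f t) t) ∈ Ξ)
    {ζ : Fin T → ι → ℝ}
    (hζ : ∀ s : Fin T, ζ s ∈ convexHull ℝ ((fun ℓ => ξ ℓ s) '' Set.Iio K)) :
    ((1 : ℝ), ζ) ∈ Ξ := by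
  have hslice : Convex ℝ {z : Fin T → ι → ℝ | ((1 : ℝ), z) ∈ Ξ} := by
    intro y hy z hz a c ha hc hac
    simpa [hac] using hconv hy hz ha hc hac
  have hmem : ζ ∈ convexHull ℝ
      (Set.univ.pi fun s : Fin T => (fun ℓ => ξ ℓ (s : ℕ)) '' Set.Iio K) := by
    rw [convexHull_pi]
    exact fun s _ => hζ s
  refine convexHull_min (fun z hz => ?_) hslice hmem
  choose f hf hfz using fun s => hz s (Set.mem_univ s)
  have h := hquasi (fun t => if h : t < T then f ⟨t, h⟩ else 0) fun t => by
    split_ifs with h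
    · exact hf ⟨t, h⟩
    · exact hK
  have hz' : (fun t : Fin T => ξ (if h : (t : ℕ) < T then f ⟨t, h⟩ else 0) t) = z := by
    funext t
    simpa using hfz t
  rwa [hz'] at h

section Policy

variable {n : ℕ} (K : ℕ) (ubar : ℕ → Fin n × Fin 2 → ℝ)
  (Q : ℕ → ℕ → Matrix (Fin n × Fin 2) (Fin n × Fin 3) ℝ) (ξ : ℕ → ℕ → Fin n × Fin 3 → ℝ)

lemma uslow_update_self (k t : ℕ) :
    uslow ubar Q (Function.update (slowAvg K ξ) t (ξ k t)) t = ufast K ubar Q ξ k t := by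
  have h : ∑ s ∈ range t, (Q t s).mulVec (Function.update (slowAvg K ξ) t (ξ k t) s)
      = ∑ s ∈ range t, (Q t s).mulVec (slowAvg K ξ s) :=
    sum_congr rfl fun s hs => by rw [Function.update_of_ne (mem_range.1 hs).ne]
  rw [uslow, ufast, sum_range_succ, h, Function.update_self]
  abel

lemma uslow_update_of_lt (ζ : ℕ → Fin n × Fin 3 → ℝ) (w : Fin n × Fin 3 → ℝ) {s t : ℕ}
    (hst : s < t) : uslow ubar Q (Function.update ζ t w) s = uslow ubar Q ζ s := by
  rw [uslow, uslow]
  congr 1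
  refine sum_congr rfl fun r hr => ?_
  rw [Function.update_of_ne (by rw [mem_range] at hr; omega)]

/-- On average, the fast time-scale inputs agree with the slow time-scale input. -/
lemma uslow_slowAvg {K : ℕ} (hK : 0 < K) (t : ℕ) :
    uslow ubar Q (slowAvg K ξ) t = (K : ℝ)⁻¹ • ∑ k ∈ range K, ufast K ubar Q ξ k t := by
  have hK' : (K : ℝ) ≠ 0 := by positivity
  simp only [uslow, ufast, sum_add_distrib, sum_const, card_range, sum_range_succ _ t,
    ← Nat.cast_smul_eq_nsmul ℝ, smul_add, inv_smul_smul₀ hK']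
  rw [slowAvg, Matrix.mulVec_smul, Matrix.mulVec_sum]
  abel

lemma xslow_succ (Δ : ℝ) (x0 : Fin n → ℝ) (ζ : ℕ → Fin n × Fin 3 → ℝ) (t : ℕ) :
    xslow Δ x0 ubar Q ζ (t + 1)
      = xslow Δ x0 ubar Q ζ t + (Bmat n Δ).mulVec (uslow ubar Q ζ t) := by
  rw [xslow, xslow, sum_range_succ, Matrix.mulVec_add, add_assoc]

lemma xslow_update_succ (Δ : ℝ) (x0 : Fin n → ℝ) (k t : ℕ) :
    xslow Δ x0 ubar Q (Function.update (slowAvg K ξ) t (ξ k t)) (t + 1)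
      = xslow Δ x0 ubar Q (slowAvg K ξ) t + (Bmat n Δ).mulVec (ufast K ubar Q ξ k t) := by
  rw [xslow_succ, uslow_update_self, xslow, xslow,
    sum_congr rfl fun s hs => uslow_update_of_lt ubar Q _ _ (mem_range.1 hs)]

end Policy

/-- A recursion that moves by `(y k - z) / K` at step `k`, starting from `z`, stays in `[0, b]` as
long as `z` and all targets `y k` do. -/
lemma mem_Icc_of_averaged_steps {K : ℕ} (hK : 0 < K) {z b : ℝ} {a y : ℕ → ℝ} (h0 : a 0 = z)
    (hz : z ∈ Set.Icc 0 b) (hy : ∀ k < K, y k ∈ Set.Icc 0 b)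
    (hstep : ∀ k < K, a (k + 1) = a k + (K : ℝ)⁻¹ * (y k - z)) {k : ℕ} (hk : k ≤ K) :
    a k ∈ Set.Icc 0 b := by
  have hKpos : (0 : ℝ) < (K : ℝ)⁻¹ := by positivity
  have hK1 : (K : ℝ)⁻¹ * K = 1 := inv_mul_cancel₀ (by positivity)
  have key : ∀ k ≤ K, (1 - (K : ℝ)⁻¹ * k) * z ≤ a k ∧
      a k ≤ (1 - (K : ℝ)⁻¹ * k) * z + (K : ℝ)⁻¹ * k * b := by
    intro k
    induction k with
    | zero => simp [h0]
    | succ k ih =>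
      intro hk
      obtain ⟨hl, hu⟩ := ih (by omega)
      obtain ⟨hyl, hyu⟩ := hy k hk
      have hyl' := mul_nonneg hKpos.le hyl
      have hyu' := mul_le_mul_of_nonneg_left hyu hKpos.le
      rw [hstep k hk]
      push_cast
      constructor <;> linarith
  obtain ⟨hl, hu⟩ := key k hk
  have hfrac : 0 ≤ 1 - (K : ℝ)⁻¹ * k := by
    rw [sub_nonneg, ← hK1]
    gcongr
  have hlo := mul_nonneg hfrac hz.1
  have hhi := mul_le_mul_of_nonneg_left hz.2 hfrac
  constructor <;> linarith

/-- Proposition 3: fast time-scale feasibility: if the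
decentralized affine policy is feasible for the slow time-scale robust
constraints (voltage, inverter apparent power, storage power, and storage
state), then the fast time-scale trajectories it generates satisfy the same
constraints on the fast time-scale. -/
theorem statement_8 (n T K : ℕ) (hn : 0 < n) (hT : 0 < T) (hK : 0 < K)
    (Ξ : Set (ℝ × (Fin T → Fin n × Fin 3 → ℝ))) (hconv : Convex ℝ Ξ)
    (ξ : ℕ → ℕ → Fin n × Fin 3 → ℝ)
    (hquasi : ∀ f : ℕ → ℕ, (∀ t, f t < K) →
      ((1 : ℝ), fun t : Fin T => ξ (f t) t) ∈ Ξ)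
    (ubar : ℕ → Fin n × Fin 2 → ℝ)
    (Q : ℕ → ℕ → Matrix (Fin n × Fin 2) (Fin n × Fin 3) ℝ)
    (R X : Matrix (Fin n) (Fin n) ℝ) (v0 : ℝ)
    (Δ : ℝ) (hΔ : 0 < Δ) (x0 : Fin n → ℝ)
    (vlo2 vhi2 plo phi b sI : Fin n → ℝ) (hsI : ∀ i, 0 < sI i)
    (xf : ℕ → ℕ → Fin n → ℝ)
    (hx00 : xf 0 0 = x0)
    (hstep : ∀ t < T, ∀ k < K,
      xf (k + 1) t
        = xf k t + (K : ℝ)⁻¹ • (Bmat n Δ).mulVec (ufast K ubar Q ξ k t))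
    (hbdry : ∀ t, t + 1 < T → xf 0 (t + 1) = xf K t)
    (hslow : ∀ ζ : ℕ → Fin n × Fin 3 → ℝ,
      ((1 : ℝ), fun s : Fin T => ζ s) ∈ Ξ →
      (∀ t < T, ∀ i,
        (vlo2 i ≤ (Vu n R X).mulVec (uslow ubar Q ζ t) i
            + (Vxi n R X).mulVec (ζ t) i + v0 ^ 2 ∧
          (Vu n R X).mulVec (uslow ubar Q ζ t) i
            + (Vxi n R X).mulVec (ζ t) i + v0 ^ 2 ≤ vhi2 i) ∧
        ((Smq n).mulVec (uslow ubar Q ζ t) i ^ 2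
            + (SmI n).mulVec (ζ t) i ^ 2 ≤ sI i ^ 2) ∧
        (plo i ≤ (Smp n).mulVec (uslow ubar Q ζ t) i ∧
          (Smp n).mulVec (uslow ubar Q ζ t) i ≤ phi i)) ∧
      (∀ t ≤ T, ∀ i,
        0 ≤ xslow Δ x0 ubar Q ζ t i ∧ xslow Δ x0 ubar Q ζ t i ≤ b i)) :
    (∀ t < T, ∀ k < K, ∀ i,
      (vlo2 i ≤ (Vu n R X).mulVec (ufast K ubar Q ξ k t) i
          + (Vxi n R X).mulVec (ξ k t) i + v0 ^ 2 ∧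
        (Vu n R X).mulVec (ufast K ubar Q ξ k t) i
          + (Vxi n R X).mulVec (ξ k t) i + v0 ^ 2 ≤ vhi2 i) ∧
      ((Smq n).mulVec (ufast K ubar Q ξ k t) i ^ 2
          + (SmI n).mulVec (ξ k t) i ^ 2 ≤ sI i ^ 2) ∧
      (plo i ≤ (Smp n).mulVec (ufast K ubar Q ξ k t) i ∧
        (Smp n).mulVec (ufast K ubar Q ξ k t) i ≤ phi i)) ∧
    (∀ t < T, ∀ k ≤ K, ∀ i, 0 ≤ xf k t i ∧ xf k t i ≤ b i) := by
  have havg := slowAvg_mem_convexHull hK ξ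
  have hmemAvg : ((1 : ℝ), fun s : Fin T => slowAvg K ξ s) ∈ Ξ :=
    mem_of_forall_mem_convexHull hK hconv hquasi fun s => havg s
  have hmem : ∀ t, ∀ k < K,
      ((1 : ℝ), fun s : Fin T => Function.update (slowAvg K ξ) t (ξ k t) s) ∈ Ξ := by
    intro t k hk
    refine mem_of_forall_mem_convexHull hK hconv hquasi fun s => ?_
    by_cases hs : (s : ℕ) = t
    · subst hs
      rw [Function.update_self]
      exact subset_convexHull ℝ _ ⟨k, hk, rfl⟩
    · rw [Function.update_of_ne hs]
      exact havg s
  refine ⟨fun t ht k hk i => ?_, fun t ht k hk i => ?_⟩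
  · have h := (hslow _ (hmem t k hk)).1 t ht i
    rwa [uslow_update_self, Function.update_self] at h
  have hpartial : ∀ t < T, ∀ k ≤ K, xf k t = xf 0 t
      + (K : ℝ)⁻¹ • (Bmat n Δ).mulVec (∑ j ∈ Finset.range k, ufast K ubar Q ξ j t) := by
    intro t ht k
    induction k with
    | zero => simp
    | succ k ih =>
      intro hk
      rw [hstep t ht k hk, ih (by omega), Finset.sum_range_succ, Matrix.mulVec_add, smul_add,
        add_assoc]
  have hstart : ∀ t < T, xf 0 t = xslow Δ x0 ubar Q (slowAvg K ξ) t := by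
    intro t
    induction t with
    | zero => simp [xslow, hx00]
    | succ t ih =>
      intro ht
      rw [hbdry t ht, hpartial t (by omega) K le_rfl, ih (by omega), xslow_succ,
        uslow_slowAvg ubar Q ξ hK, Matrix.mulVec_smul]
  refine mem_Icc_of_averaged_steps hK (a := fun k => xf k t i)
    (y := fun k => xslow Δ x0 ubar Q (Function.update (slowAvg K ξ) t (ξ k t)) (t + 1) i)
    (congrFun (hstart t ht) i) ((hslow _ hmemAvg).2 t ht.le i)
    (fun k hk => (hslow _ (hmem t k hk)).2 (t + 1) ht i) (fun k hk => ?_) hk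
  simp [hstep t ht k hk, xslow_update_succ]
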